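/- arXiv:2305.18941 — 2 statements merged into one kernel-verified Lean document; each statement's English description precedes it below -/
import Mathlib

section
/- Let P > 0, k = sqrt((P+1)² + 1), h = 1 − sqrt((k−1)/(k+1)), and f(x) = (k−1)/(1−x)³ for 0 ≤ x < h, f(x) = 0 for h ≤ x ≤ 1. Let u1(r1,r2) = r2(1−r1) − r1·P + θ(r1,r2)(1−r1)(1−r2) with θ(r1,r2) = 1 if r1 > r2, 1/2 if r1 = r2, 0 otherwise, and u2(r1,r2) = u1(r2,r1). If (μ1, μ2) is any mixed Nash equilibrium of this game — i.e., probability measures on [0,1] such that no player can strictly increase their expected payoff by unilaterally replacing their measure by any other probability measure — then μ1 = μ2 and both equal the measure with density f with respect to Lebesgue measure on [0,1]. In particular the Nash equilibrium is unique and symmetric. -/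
open MeasureTheory

/-- Tie-breaking function: 1 if `r1 > r2`, 1/2 if `r1 = r2`, 0 if `r1 < r2`. -/
noncomputable def theta (r1 r2 : ℝ) : ℝ :=
  if r1 > r2 then 1 else if r1 = r2 then 1 / 2 else 0

/-- Expected utility of Player 1 in the two-player CfR game with penalty `P`
and reward `R = 1`. -/
noncomputable def u1 (P r1 r2 : ℝ) : ℝ :=
  r2 * (1 - r1) - r1 * P + theta r1 r2 * ((1 - r1) * (1 - r2))

/-- Expected utility of Player 2 (by symmetry). -/
noncomputable def u2 (P r1 r2 : ℝ) : ℝ := u1 P r2 r1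

open Set Filter Topology

/-- The measure `(1 - y) dμ(y)`, with the weight truncated at zero. -/
noncomputable def weighted (μ : Measure ℝ) : Measure ℝ :=
  μ.withDensity fun y => ENNReal.ofReal (1 - y)

/-- In terms of the weighted measure of the opponent's strategy `ν`, the strategy `μ` lives on
`[0, 1)` and maximizes the payoff there; `W` and `c` are the normalized value and intercept. -/
structure BestResponse (W c : ℝ) (μ ν : Measure ℝ) : Prop where
  pos : 0 < W
  le : ∀ x ∈ Ico (0 : ℝ) 1,
    ((weighted ν).real (Iio x) + (weighted ν).real (Iic x)) / 2 ≤ W / (1 - x) - c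
  ae_eq : ∀ᵐ x ∂μ, x ∈ Ico (0 : ℝ) 1 ∧
    ((weighted ν).real (Iio x) + (weighted ν).real (Iic x)) / 2 = W / (1 - x) - c

/-- The points of `[0, 1)` where the weighted distribution function of `ν` meets its bound. -/
def contactSet (W c : ℝ) (ν : Measure ℝ) : Set ℝ :=
  {x | x ∈ Ico (0 : ℝ) 1 ∧ (weighted ν).real (Iic x) = W / (1 - x) - c}

theorem weighted_absolutelyContinuous (μ : Measure ℝ) : weighted μ ≪ μ :=
  withDensity_absolutelyContinuous _ _

theorem weighted_real_Iic_mono (ν : Measure ℝ) [IsFiniteMeasure (weighted ν)] :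
    Monotone fun x => (weighted ν).real (Iic x) :=
  fun _ _ h => measureReal_mono (Iic_subset_Iic.2 h)

theorem weighted_real_Iio_mono (ν : Measure ℝ) [IsFiniteMeasure (weighted ν)] :
    Monotone fun x => (weighted ν).real (Iio x) :=
  fun _ _ h => measureReal_mono (Iio_subset_Iio h)

theorem weighted_real_Iic_eq_of_null {ν : Measure ℝ} [IsFiniteMeasure (weighted ν)] {x y : ℝ}
    (hxy : x ≤ y) (h : ν (Ioc x y) = 0) :
    (weighted ν).real (Iic y) = (weighted ν).real (Iic x) := by
  rw [← Iic_union_Ioc_eq_Iic hxy]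
  apply measureReal_congr
  exact union_ae_eq_left_of_ae_eq_empty (ae_eq_empty.2 (weighted_absolutelyContinuous ν h))

theorem tendsto_real_Iic_nhdsGT (lam : Measure ℝ) [IsFiniteMeasure lam] (x : ℝ) :
    Tendsto (fun y => lam.real (Iic y)) (𝓝[>] x) (𝓝 (lam.real (Iic x))) := by
  have h := tendsto_measure_biInter_gt (μ := lam) (s := fun y : ℝ => Iic y) (a := x)
    (fun r _ => measurableSet_Iic.nullMeasurableSet) (fun i j _ hij => Iic_subset_Iic.2 hij)
    ⟨x + 1, by simp, measure_ne_top _ _⟩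
  have hx : (⋂ r > x, Iic r) = Iic x := by
    ext z
    simp only [mem_iInter, mem_Iic]
    exact ⟨fun hz => le_of_forall_gt_imp_ge_of_dense hz, fun hz r hr => hz.trans hr.le⟩
  rw [hx] at h
  exact (ENNReal.tendsto_toReal (measure_ne_top _ _)).comp h

theorem div_one_sub_lt {W x y : ℝ} (hW : 0 < W) (hxy : x < y) (hy : y < 1) :
    W / (1 - x) < W / (1 - y) :=
  div_lt_div_of_pos_left hW (by linarith) (by linarith)

theorem continuousAt_div_one_sub (W c : ℝ) {x : ℝ} (hx : x < 1) :
    ContinuousAt (fun y : ℝ => W / (1 - y) - c) x := by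
  have : (1 : ℝ) - x ≠ 0 := by linarith
  fun_prop (disch := assumption)

namespace BestResponse

variable {W c W₁ W₂ c₁ c₂ : ℝ} {μ ν : Measure ℝ}

theorem Iic_le [IsFiniteMeasure (weighted ν)] (h : BestResponse W c μ ν) {x : ℝ}
    (hx : x ∈ Ico (0 : ℝ) 1) : (weighted ν).real (Iic x) ≤ W / (1 - x) - c := by
  have hc := (continuousAt_div_one_sub W c hx.2).tendsto.mono_left
    (nhdsWithin_le_nhds (s := Ioi x))
  refine ge_of_tendsto hc ?_
  filter_upwards [Ioo_mem_nhdsGT hx.2] with y hy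
  have h1 := h.le y ⟨hx.1.trans hy.1.le, hy.2⟩
  have h2 : (weighted ν).real (Iic x) ≤ (weighted ν).real (Iio y) :=
    measureReal_mono (Iic_subset_Iio.2 hy.1)
  have h3 := weighted_real_Iic_mono ν hy.1.le
  simp only at h3
  linarith

theorem real_Iio_le_Iic [IsFiniteMeasure (weighted ν)] (x : ℝ) :
    (weighted ν).real (Iio x) ≤ (weighted ν).real (Iic x) :=
  measureReal_mono Iio_subset_Iic_self

theorem ae_mem_contactSet [IsFiniteMeasure (weighted ν)] (h : BestResponse W c μ ν) :
    ∀ᵐ x ∂μ, x ∈ contactSet W c ν := by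
  filter_upwards [h.ae_eq] with x hx
  have h1 := h.Iic_le hx.1
  have h2 := real_Iio_le_Iic (ν := ν) x
  exact ⟨hx.1, by linarith [hx.2]⟩

theorem measure_eq_zero_of_disjoint [IsFiniteMeasure (weighted ν)] (h : BestResponse W c μ ν)
    {s : Set ℝ} (hs : ∀ x ∈ s, x ∉ contactSet W c ν) : μ s = 0 :=
  measure_mono_null (fun x hx => hs x hx) h.ae_mem_contactSet

theorem mem_contactSet_of_atom [IsFiniteMeasure (weighted ν)] (h : BestResponse W c μ ν)
    {x : ℝ} (hx : μ {x} ≠ 0) : x ∈ contactSet W c ν := by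
  by_contra hc
  exact hx (h.measure_eq_zero_of_disjoint (by simpa using hc))

theorem measure_singleton_of_atom [IsFiniteMeasure (weighted ν)] (h : BestResponse W c μ ν)
    {x : ℝ} (hx : μ {x} ≠ 0) : ν {x} = 0 := by
  obtain ⟨hx1, hx2⟩ : x ∈ Ico (0 : ℝ) 1 ∧
      ((weighted ν).real (Iio x) + (weighted ν).real (Iic x)) / 2 = W / (1 - x) - c := by
    by_contra hc
    exact hx (measure_mono_null (by simpa using hc) h.ae_eq)
  have h1 := h.Iic_le hx1
  have h2 : (weighted ν).real (Iic x) = (weighted ν).real (Iio x) + (weighted ν).real {x} := by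
    rw [← Iio_union_right, measureReal_union (by simp) (measurableSet_singleton x)]
  have h3 : (weighted ν).real {x} = 0 :=
    le_antisymm (by linarith) measureReal_nonneg
  have h4 : weighted ν {x} = 0 := (measureReal_eq_zero_iff).1 h3
  have h5 : ENNReal.ofReal (1 - x) ≠ 0 := by
    simpa using hx1.2
  simpa [weighted, withDensity_apply, h5, hx1.2.not_ge] using h4

theorem exists_forall_notMem_contactSet [IsFiniteMeasure (weighted ν)]
    (h : BestResponse W c μ ν) {x : ℝ} (hx : x ∈ Ico (0 : ℝ) 1) (hxS : x ∉ contactSet W c ν) :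
    ∃ y > x, ∀ z ∈ Icc x y, z ∉ contactSet W c ν := by
  have hlt : (weighted ν).real (Iic x) < W / (1 - x) - c :=
    lt_of_le_of_ne (h.Iic_le hx) fun he => hxS ⟨hx, he⟩
  obtain ⟨y, hy, hxy⟩ := (((tendsto_real_Iic_nhdsGT (weighted ν) x).eventually_lt_const hlt).and
    self_mem_nhdsWithin).exists
  refine ⟨y, hxy, fun z hz hzS => ?_⟩
  have h1 := weighted_real_Iic_mono ν hz.2
  have h2 : W / (1 - x) ≤ W / (1 - z) := by
    rcases hz.1.eq_or_lt with rfl | h'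
    · rfl
    · exact (div_one_sub_lt h.pos h' hzS.1.2).le
  have h3 := hzS.2
  simp only at h1
  linarith

theorem atom_of_mem_contactSet [IsFiniteMeasure (weighted ν)] (h : BestResponse W c μ ν)
    {x b : ℝ} (hx : x ∈ Ico (0 : ℝ) 1) (hxb : x < b) (hb : b ∈ contactSet W c ν)
    (hν : ν (Ioo x b) = 0) : ν {b} ≠ 0 := by
  intro h0
  have h1 : ν (Ioc x b) = 0 := by
    rw [← Ioo_union_right hxb]
    exact measure_union_null hν h0
  have h2 := weighted_real_Iic_eq_of_null hxb.le h1
  have h3 := h.Iic_le hx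
  have h4 := div_one_sub_lt h.pos hxb hb.1.2
  linarith [hb.2]

/-- Below any contact point of either player, every point is a contact point. -/
theorem mem_contactSet_of_lt [IsFiniteMeasure (weighted μ)] [IsFiniteMeasure (weighted ν)]
    (h₁ : BestResponse W₁ c₁ μ ν) (h₂ : BestResponse W₂ c₂ ν μ) {x s : ℝ} (hx : 0 ≤ x)
    (hxs : x < s) (hs : s ∈ contactSet W₁ c₁ ν ∪ contactSet W₂ c₂ μ) :
    x ∈ contactSet W₁ c₁ ν := by
  have hs1 : s < 1 := hs.elim (fun h => h.1.2) fun h => h.1.2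
  have hxI : x ∈ Ico (0 : ℝ) 1 := ⟨hx, hxs.trans hs1⟩
  by_contra hxS
  obtain ⟨y, hxy, hy⟩ := h₁.exists_forall_notMem_contactSet hxI hxS
  have hμ : μ (Icc x y) = 0 := h₁.measure_eq_zero_of_disjoint hy
  have hy2 : ∀ z ∈ Ioc x y, z ∉ contactSet W₂ c₂ μ := fun z hz hzS =>
    h₂.atom_of_mem_contactSet hxI hz.1 hzS
      (measure_mono_null (Ioo_subset_Icc_self.trans (Icc_subset_Icc_right hz.2)) hμ)
      (measure_mono_null (singleton_subset_iff.2 (Ioc_subset_Icc_self hz)) hμ)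
  set A := (contactSet W₁ c₁ ν ∪ contactSet W₂ c₂ μ) ∩ Ioi x with hA
  have hAne : A.Nonempty := ⟨s, hs, hxs⟩
  have hAbdd : BddBelow A := ⟨x, fun z hz => hz.2.le⟩
  have hyb : y ≤ sInf A := le_csInf hAne fun z hz => by
    by_contra! hzy
    rcases hz.1 with h | h
    · exact hy z ⟨hz.2.le, hzy.le⟩ h
    · exact hy2 z ⟨hz.2, hzy.le⟩ h
  set b := sInf A
  have hxb : x < b := hxy.trans_le hyb
  have hbI : b ∈ Ico (0 : ℝ) 1 :=
    ⟨hx.trans hxb.le, (csInf_le hAbdd ⟨hs, hxs⟩).trans_lt hs1⟩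
  have hgap : ∀ z ∈ Ioo x b, z ∉ contactSet W₁ c₁ ν ∪ contactSet W₂ c₂ μ := fun z hz hzS =>
    hz.2.not_ge (csInf_le hAbdd ⟨hzS, hz.1⟩)
  have hμ0 : μ (Ioo x b) = 0 :=
    h₁.measure_eq_zero_of_disjoint fun z hz hzS => hgap z hz (Or.inl hzS)
  have hν0 : ν (Ioo x b) = 0 :=
    h₂.measure_eq_zero_of_disjoint fun z hz hzS => hgap z hz (Or.inr hzS)
  have hbS : b ∈ contactSet W₁ c₁ ν ∪ contactSet W₂ c₂ μ := by
    by_contra hb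
    rw [mem_union, not_or] at hb
    obtain ⟨y₁, hy₁, hz₁⟩ := h₁.exists_forall_notMem_contactSet hbI hb.1
    obtain ⟨y₂, hy₂, hz₂⟩ := h₂.exists_forall_notMem_contactSet hbI hb.2
    obtain ⟨a, haA, ha⟩ := exists_lt_of_csInf_lt hAne (lt_min hy₁ hy₂ : b < min y₁ y₂)
    have hba : b ≤ a := csInf_le hAbdd haA
    rcases haA.1 with h | h
    · exact hz₁ a ⟨hba, ha.le.trans (min_le_left _ _)⟩ h
    · exact hz₂ a ⟨hba, ha.le.trans (min_le_right _ _)⟩ h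
  rcases hbS with hb | hb
  · have hνb := h₁.atom_of_mem_contactSet hxI hxb hb hν0
    have hμb := h₂.atom_of_mem_contactSet hxI hxb (h₂.mem_contactSet_of_atom hνb) hμ0
    exact hνb (h₁.measure_singleton_of_atom hμb)
  · have hμb := h₂.atom_of_mem_contactSet hxI hxb hb hμ0
    have hνb := h₁.atom_of_mem_contactSet hxI hxb (h₁.mem_contactSet_of_atom hμb) hν0
    exact hνb (h₁.measure_singleton_of_atom hμb)

theorem Iic_eq_of_forall_lt [IsFiniteMeasure (weighted ν)] (h : BestResponse W c μ ν) {T : ℝ}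
    (hT : T ∈ Ioo (0 : ℝ) 1) (hS : ∀ x, 0 ≤ x → x < T → x ∈ contactSet W c ν) :
    (weighted ν).real (Iic T) = W / (1 - T) - c := by
  refine le_antisymm (h.Iic_le ⟨hT.1.le, hT.2⟩) ?_
  have hc := (continuousAt_div_one_sub W c hT.2).tendsto.mono_left
    (nhdsWithin_le_nhds (s := Iio T))
  refine le_of_tendsto hc ?_
  filter_upwards [Ioo_mem_nhdsLT hT.1] with y hy
  rw [← (hS y hy.1.le hy.2).2]
  exact weighted_real_Iic_mono ν hy.2.le

/-- Both weighted distribution functions meet their bounds exactly up to a common endpoint. -/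
theorem exists_endpoint [IsProbabilityMeasure μ] [IsProbabilityMeasure ν]
    [IsFiniteMeasure (weighted μ)] [IsFiniteMeasure (weighted ν)]
    (h₁ : BestResponse W₁ c₁ μ ν) (h₂ : BestResponse W₂ c₂ ν μ) :
    ∃ T ∈ Ioo (0 : ℝ) 1, μ (Ioi T) = 0 ∧ ν (Ioi T) = 0 ∧
      (∀ x ∈ Icc 0 T, (weighted ν).real (Iic x) = W₁ / (1 - x) - c₁) ∧
      ∀ x ∈ Icc 0 T, (weighted μ).real (Iic x) = W₂ / (1 - x) - c₂ := by
  set S := contactSet W₁ c₁ ν ∪ contactSet W₂ c₂ μ with hSdef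
  have hbound : ∀ {W c : ℝ} {ν' μ' : Measure ℝ} [IsFiniteMeasure (weighted ν')],
      BestResponse W c μ' ν' → ∃ M < (1 : ℝ), ∀ x ∈ contactSet W c ν', x ≤ M := by
    intro W c ν' μ' _ h
    have hK : 0 < |(weighted ν').real univ + c| + 1 := by positivity
    refine ⟨1 - W / (|(weighted ν').real univ + c| + 1), by
      have := div_pos h.pos hK; linarith, fun x hx => ?_⟩
    have h1 : (weighted ν').real (Iic x) ≤ (weighted ν').real univ := measureReal_mono (subset_univ _)
    have h2 : W / (1 - x) ≤ |(weighted ν').real univ + c| + 1 := by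
      have := le_abs_self ((weighted ν').real univ + c)
      linarith [hx.2]
    have hx1 : 0 < 1 - x := by linarith [hx.1.2]
    have h3 : W / (|(weighted ν').real univ + c| + 1) ≤ 1 - x := by
      rw [div_le_iff₀ hx1] at h2
      rw [div_le_iff₀ hK]
      linarith
    linarith
  obtain ⟨M₁, hM₁, hb₁⟩ := hbound h₁
  obtain ⟨M₂, hM₂, hb₂⟩ := hbound h₂
  obtain ⟨s₀, hs₀⟩ := h₁.ae_mem_contactSet.exists
  have hSne : S.Nonempty := ⟨s₀, Or.inl hs₀⟩
  have hSM : ∀ s ∈ S, s ≤ max M₁ M₂ := fun s hs =>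
    hs.elim (fun h => (hb₁ s h).trans (le_max_left _ _)) fun h => (hb₂ s h).trans (le_max_right _ _)
  have hSbdd : BddAbove S := ⟨_, hSM⟩
  have hT1 : sSup S < 1 := (csSup_le hSne hSM).trans_lt (max_lt hM₁ hM₂)
  have hμT : μ (Ioi (sSup S)) = 0 := h₁.measure_eq_zero_of_disjoint fun x hx hxS =>
    (le_csSup hSbdd (Or.inl hxS)).not_gt hx
  have hνT : ν (Ioi (sSup S)) = 0 := h₂.measure_eq_zero_of_disjoint fun x hx hxS =>
    (le_csSup hSbdd (Or.inr hxS)).not_gt hx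
  have hT0 : 0 < sSup S := by
    by_contra! hT
    have hsub : ∀ s ∈ S, s = 0 := fun s hs =>
      le_antisymm ((le_csSup hSbdd hs).trans hT) (hs.elim (fun h => h.1.1) fun h => h.1.1)
    have hμ0 : μ {0}ᶜ = 0 := h₁.measure_eq_zero_of_disjoint fun x hx hxS => hx (hsub x (Or.inl hxS))
    have hν0 : ν {0}ᶜ = 0 := h₂.measure_eq_zero_of_disjoint fun x hx hxS => hx (hsub x (Or.inr hxS))
    rw [prob_compl_eq_zero_iff (measurableSet_singleton _)] at hμ0 hν0
    have := h₁.measure_singleton_of_atom (x := 0) (by simp [hμ0])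
    simp [hν0] at this
  have hc₁ : ∀ x, 0 ≤ x → x < sSup S → x ∈ contactSet W₁ c₁ ν := fun x hx hxT => by
    obtain ⟨s, hs, hxs⟩ := exists_lt_of_lt_csSup hSne hxT
    exact h₁.mem_contactSet_of_lt h₂ hx hxs hs
  have hc₂ : ∀ x, 0 ≤ x → x < sSup S → x ∈ contactSet W₂ c₂ μ := fun x hx hxT => by
    obtain ⟨s, hs, hxs⟩ := exists_lt_of_lt_csSup hSne hxT
    exact h₂.mem_contactSet_of_lt h₁ hx hxs hs.symm
  refine ⟨sSup S, ⟨hT0, hT1⟩, hμT, hνT, fun x hx => ?_, fun x hx => ?_⟩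
  · rcases hx.2.eq_or_lt with rfl | hlt
    · exact h₁.Iic_eq_of_forall_lt ⟨hT0, hT1⟩ hc₁
    · exact (hc₁ x hx.1 hlt).2
  · rcases hx.2.eq_or_lt with rfl | hlt
    · exact h₂.Iic_eq_of_forall_lt ⟨hT0, hT1⟩ hc₂
    · exact (hc₂ x hx.1 hlt).2

end BestResponse

section Payoff

variable {P : ℝ} {μ ν : Measure ℝ}

theorem integrable_id_of_ae_mem_Icc [IsFiniteMeasure μ] (hμ : ∀ᵐ x ∂μ, x ∈ Icc (0 : ℝ) 1) :
    Integrable (fun x : ℝ => x) μ :=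
  Integrable.of_bound measurable_id.aestronglyMeasurable 1 <| by
    filter_upwards [hμ] with x hx
    rw [Real.norm_eq_abs, abs_le]
    exact ⟨by linarith [hx.1], hx.2⟩

theorem integrable_one_sub_of_ae_mem_Icc [IsFiniteMeasure μ]
    (hμ : ∀ᵐ x ∂μ, x ∈ Icc (0 : ℝ) 1) : Integrable (fun x : ℝ => 1 - x) μ :=
  (integrable_const 1).sub (integrable_id_of_ae_mem_Icc hμ)

theorem isFiniteMeasure_weighted [IsFiniteMeasure μ] (hμ : ∀ᵐ x ∂μ, x ∈ Icc (0 : ℝ) 1) :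
    IsFiniteMeasure (weighted μ) :=
  isFiniteMeasure_withDensity_ofReal (integrable_one_sub_of_ae_mem_Icc hμ).2

theorem weighted_real_apply (hμ : ∀ᵐ x ∂μ, x ∈ Icc (0 : ℝ) 1) {s : Set ℝ}
    (hs : MeasurableSet s) : (weighted μ).real s = ∫ y in s, (1 - y) ∂μ := by
  rw [measureReal_def, weighted, withDensity_apply _ hs, integral_eq_lintegral_of_nonneg_ae]
  · filter_upwards [ae_restrict_of_ae hμ] with x hx
    simpa using hx.2
  · fun_prop

theorem u1_eq_indicator (P x y : ℝ) :
    u1 P x y = (1 - x) * y - x * P + (1 - x) / 2 * ((Iio x).indicator (fun z => 1 - z) y +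
      (Iic x).indicator (fun z => 1 - z) y) := by
  unfold u1 theta
  rcases lt_trichotomy x y with h | h | h
  · simp [h.not_gt, h.ne, h.not_ge]; ring
  · subst h; simp; ring
  · simp [h, h.le]; ring

theorem integral_u1 [IsProbabilityMeasure μ] (hμ : ∀ᵐ x ∂μ, x ∈ Icc (0 : ℝ) 1) (P x : ℝ) :
    ∫ y, u1 P x y ∂μ = (1 - x) * ((∫ y, y ∂μ) + P +
      ((weighted μ).real (Iio x) + (weighted μ).real (Iic x)) / 2) - P := by
  have hid := integrable_id_of_ae_mem_Icc hμ
  have hsub := integrable_one_sub_of_ae_mem_Icc hμ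
  have h1 := hsub.indicator (measurableSet_Iio (a := x))
  have h2 := hsub.indicator (measurableSet_Iic (a := x))
  simp_rw [u1_eq_indicator]
  rw [integral_add, integral_sub, integral_const_mul, integral_const_mul, integral_const_mul,
    integral_add h1 h2,
    integral_indicator measurableSet_Iio, integral_indicator measurableSet_Iic,
    weighted_real_apply hμ measurableSet_Iio, weighted_real_apply hμ measurableSet_Iic]
  · simp; ring
  · exact hid.const_mul _
  · exact integrable_const _
  · exact (hid.const_mul _).sub (integrable_const _)
  · exact (h1.add h2).const_mul _

theorem integrable_integral_u1 [IsProbabilityMeasure μ] [IsProbabilityMeasure ν]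
    (hμ : ∀ᵐ x ∂μ, x ∈ Icc (0 : ℝ) 1) (hν : ∀ᵐ x ∂ν, x ∈ Icc (0 : ℝ) 1) (P : ℝ) :
    Integrable (fun x => ∫ y, u1 P x y ∂ν) μ := by
  have := isFiniteMeasure_weighted hν
  simp_rw [integral_u1 hν]
  have hI : Measurable fun x => (weighted ν).real (Iio x) := (weighted_real_Iio_mono ν).measurable
  have hH : Measurable fun x => (weighted ν).real (Iic x) := (weighted_real_Iic_mono ν).measurable
  refine Integrable.sub ?_ (integrable_const _)
  refine Integrable.mul_bdd (c := |(∫ y, y ∂ν) + P| + (weighted ν).real univ)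
    (integrable_one_sub_of_ae_mem_Icc hμ) (by fun_prop) (ae_of_all _ fun x => ?_)
  have h1 : (weighted ν).real (Iio x) ≤ (weighted ν).real univ := measureReal_mono (subset_univ _)
  have h2 : (weighted ν).real (Iic x) ≤ (weighted ν).real univ := measureReal_mono (subset_univ _)
  have h3 : 0 ≤ (weighted ν).real (Iio x) := measureReal_nonneg
  have h4 : 0 ≤ (weighted ν).real (Iic x) := measureReal_nonneg
  refine (norm_add_le _ _).trans (add_le_add le_rfl ?_)
  rw [Real.norm_eq_abs, abs_of_nonneg (by positivity)]
  linarith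

theorem bestResponse_of_forall_le [IsProbabilityMeasure μ] [IsProbabilityMeasure ν] (hP : 0 < P)
    (hμ : ∀ᵐ x ∂μ, x ∈ Icc (0 : ℝ) 1) (hν : ∀ᵐ x ∂ν, x ∈ Icc (0 : ℝ) 1)
    (hle : ∀ x ∈ Icc (0 : ℝ) 1, ∫ y, u1 P x y ∂ν ≤ ∫ x, ∫ y, u1 P x y ∂ν ∂μ) :
    BestResponse ((∫ x, ∫ y, u1 P x y ∂ν ∂μ) + P) ((∫ y, y ∂ν) + P) μ ν := by
  have hint := integrable_integral_u1 hμ hν P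
  set V := ∫ x, ∫ y, u1 P x y ∂ν ∂μ with hVdef
  have hm : 0 ≤ ∫ y, y ∂ν := integral_nonneg_of_ae (hν.mono fun x hx => hx.1)
  have hV : 0 ≤ V := by
    have h0 := hle 0 (by simp)
    rw [integral_u1 hν] at h0
    have h1 : 0 ≤ (weighted ν).real (Iio 0) := measureReal_nonneg
    have h2 : 0 ≤ (weighted ν).real (Iic 0) := measureReal_nonneg
    linarith
  refine ⟨by linarith, fun x hx => ?_, ?_⟩
  · have h := hle x ⟨hx.1, hx.2.le⟩
    rw [integral_u1 hν] at h
    rw [le_sub_iff_add_le, le_div_iff₀ (by linarith [hx.2])]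
    linarith
  · have hz : ∫ x, (V - ∫ y, u1 P x y ∂ν) ∂μ = 0 := by
      rw [integral_sub (integrable_const _) hint]
      simp [hVdef]
    rw [integral_eq_zero_iff_of_nonneg_ae (hμ.mono fun x hx => sub_nonneg.2 (hle x hx))
      ((integrable_const _).sub hint)] at hz
    filter_upwards [hμ, hz] with x hx hxz
    have hxz' : V - ∫ y, u1 P x y ∂ν = 0 := hxz
    rw [integral_u1 hν] at hxz'
    have hx1 : x < 1 := by
      refine lt_of_le_of_ne hx.2 ?_
      rintro rfl
      linarith
    refine ⟨⟨hx.1, hx1⟩, ?_⟩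
    rw [eq_sub_iff_add_eq, eq_div_iff (by linarith)]
    linarith

theorem integral_integral_u1_swap [IsProbabilityMeasure μ] [IsProbabilityMeasure ν]
    (hμ : ∀ᵐ x ∂μ, x ∈ Icc (0 : ℝ) 1) (hν : ∀ᵐ x ∂ν, x ∈ Icc (0 : ℝ) 1) (P : ℝ) :
    ∫ x, ∫ y, u1 P y x ∂ν ∂μ = ∫ y, ∫ x, u1 P y x ∂μ ∂ν := by
  refine integral_integral_swap ?_
  have hθ : Measurable fun p : ℝ × ℝ => theta p.2 p.1 := by
    unfold theta
    exact Measurable.ite (measurableSet_lt measurable_fst measurable_snd) measurable_const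
      (Measurable.ite (measurableSet_eq_fun measurable_snd measurable_fst)
        measurable_const measurable_const)
  have hmeas : Measurable fun p : ℝ × ℝ => u1 P p.2 p.1 := by
    unfold u1
    fun_prop
  refine Integrable.of_bound hmeas.aestronglyMeasurable (2 + |P|) ?_
  filter_upwards [Measure.quasiMeasurePreserving_fst.ae hμ,
    Measure.quasiMeasurePreserving_snd.ae hν] with p h1 h2
  obtain ⟨x, y⟩ := p
  obtain ⟨hx0, hx1⟩ : 0 ≤ x ∧ x ≤ 1 := h1
  obtain ⟨hy0, hy1⟩ : 0 ≤ y ∧ y ≤ 1 := h2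
  have hθ1 : |theta y x| ≤ 1 := by
    unfold theta
    split_ifs <;> norm_num
  have e1 : |x * (1 - y)| ≤ 1 := by
    rw [abs_of_nonneg (mul_nonneg hx0 (by linarith))]; nlinarith
  have e2 : |y * P| ≤ |P| := by
    rw [abs_mul, abs_of_nonneg hy0]; nlinarith [abs_nonneg P]
  have e3 : |theta y x * ((1 - y) * (1 - x))| ≤ 1 := by
    rw [abs_mul, abs_of_nonneg (mul_nonneg (by linarith : 0 ≤ 1 - y) (by linarith : 0 ≤ 1 - x))]
    exact mul_le_one₀ hθ1 (mul_nonneg (by linarith) (by linarith)) (by nlinarith)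
  change |u1 P y x| ≤ 2 + |P|
  unfold u1
  have t1 := abs_add_le (x * (1 - y) - y * P) (theta y x * ((1 - y) * (1 - x)))
  have t2 := abs_sub (x * (1 - y)) (y * P)
  linarith

end Payoff

section Density

variable {W c T z : ℝ} {μ : Measure ℝ}

theorem setLIntegral_Ioc_ofReal_eq_sub {F F' : ℝ → ℝ} {a b : ℝ} (hab : a ≤ b)
    (hF : ∀ x ∈ Icc a b, HasDerivAt F (F' x) x) (hcont : ContinuousOn F' (Icc a b))
    (hpos : ∀ x ∈ Icc a b, 0 ≤ F' x) :
    ∫⁻ x in Ioc a b, ENNReal.ofReal (F' x) = ENNReal.ofReal (F b - F a) := by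
  have hint : IntervalIntegrable F' volume a b :=
    ContinuousOn.intervalIntegrable (by rwa [uIcc_of_le hab])
  rw [← intervalIntegral.integral_eq_sub_of_hasDerivAt (by rwa [uIcc_of_le hab]) hint,
    intervalIntegral.integral_of_le hab, ofReal_integral_eq_lintegral_ofReal]
  · exact (intervalIntegrable_iff_integrableOn_Ioc_of_le hab).1 hint
  · exact (ae_restrict_mem measurableSet_Ioc).mono fun x hx => hpos x (Ioc_subset_Icc_self hx)

theorem setLIntegral_Ioc_div_one_sub_sq (hW : 0 < W) (hz : z ∈ Ico (0 : ℝ) 1) :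
    ∫⁻ y in Ioc 0 z, ENNReal.ofReal (W / (1 - y) ^ 2) = ENNReal.ofReal (W / (1 - z) - W) := by
  have hne : ∀ x ∈ Icc 0 z, 1 - x ≠ 0 := fun x hx => by linarith [hx.2, hz.2]
  rw [setLIntegral_Ioc_ofReal_eq_sub (F := fun y => W / (1 - y)) hz.1]
  · simp
  · intro x hx
    have h := ((hasDerivAt_id x).const_sub 1).inv (hne x hx)
    convert! h.const_mul W using 1
    simp [div_eq_mul_inv]
  · exact continuousOn_const.div (by fun_prop) fun x hx => pow_ne_zero 2 (hne x hx)
  · intro x _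
    positivity

theorem setLIntegral_Ioc_div_one_sub_cube (hW : 0 < W) (hz : z ∈ Ico (0 : ℝ) 1) :
    ∫⁻ y in Ioc 0 z, ENNReal.ofReal (W / (1 - y) ^ 3) =
      ENNReal.ofReal (W / 2 * (1 / (1 - z) ^ 2 - 1)) := by
  have hpos : ∀ x ∈ Icc 0 z, 0 < 1 - x := fun x hx => by linarith [hx.2, hz.2]
  rw [setLIntegral_Ioc_ofReal_eq_sub (F := fun y => W / 2 * ((1 - y) ^ 2)⁻¹) hz.1]
  · congr 1
    simp
    ring
  · intro x hx
    have hx' := (hpos x hx).ne'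
    have h := (((hasDerivAt_id x).const_sub 1).pow 2).inv (pow_ne_zero 2 hx')
    convert! h.const_mul (W / 2) using 1
    simp
    field_simp
  · exact continuousOn_const.div (by fun_prop) fun x hx => pow_ne_zero 3 (hpos x hx).ne'
  · intro x hx
    have := hpos x hx
    positivity

theorem withDensity_inv_weighted {μ : Measure ℝ} (hμ : ∀ᵐ x ∂μ, x < 1) :
    (weighted μ).withDensity (fun y => (ENNReal.ofReal (1 - y))⁻¹) = μ := by
  refine withDensity_inv_same₀ (by fun_prop) ?_ (ae_of_all _ fun _ => ENNReal.ofReal_ne_top)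
  filter_upwards [hμ] with x hx
  simpa using hx

/-- A measure whose weighted distribution function is `W / (1 - x) - c` up to `T` is a multiple of
the Dirac mass at `0` plus a measure with density `W / (1 - x) ^ 3` on `(0, T]`. -/
theorem eq_dirac_add_withDensity [IsFiniteMeasure (weighted μ)]
    (hμ : ∀ᵐ x ∂μ, x ∈ Ico (0 : ℝ) 1) (hT : T ∈ Ioo (0 : ℝ) 1) (hW : 0 < W)
    (hH : ∀ x ∈ Icc 0 T, (weighted μ).real (Iic x) = W / (1 - x) - c) (hμT : μ (Ioi T) = 0) :
    μ = ENNReal.ofReal (W - c) • Measure.dirac 0 +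
      (volume.restrict (Ioc 0 T)).withDensity fun x => ENNReal.ofReal (W / (1 - x) ^ 3) := by
  have hc : 0 ≤ W - c := by
    have h := hH 0 ⟨le_rfl, hT.1.le⟩
    rw [sub_zero, div_one] at h
    rw [← h]
    exact measureReal_nonneg
  set D := (volume.restrict (Ioc 0 T)).withDensity fun x => ENNReal.ofReal (W / (1 - x) ^ 3)
    with hD
  have hDlt : ∀ᵐ x ∂D, x < 1 :=
    (withDensity_absolutelyContinuous _ _).ae_le <|
      (ae_restrict_mem measurableSet_Ioc).mono fun x hx => hx.2.trans_lt hT.2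
  have hwD : weighted D =
      (volume.restrict (Ioc 0 T)).withDensity fun x => ENNReal.ofReal (W / (1 - x) ^ 2) := by
    rw [weighted, hD, ← withDensity_mul _ (by fun_prop) (by fun_prop)]
    refine withDensity_congr_ae ?_
    filter_upwards [ae_restrict_mem measurableSet_Ioc] with x hx
    have hx' : 0 < 1 - x := by linarith [hx.2, hT.2]
    rw [Pi.mul_apply, ← ENNReal.ofReal_mul (by positivity)]
    congr 1
    field_simp
  have hw : weighted (ENNReal.ofReal (W - c) • Measure.dirac 0 + D) =
      ENNReal.ofReal (W - c) • Measure.dirac 0 + weighted D := by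
    simp [weighted, withDensity_add_measure, withDensity_smul_measure, dirac_withDensity]
  have key : weighted μ = weighted (ENNReal.ofReal (W - c) • Measure.dirac 0 + D) := by
    rw [hw, hwD]
    refine Measure.ext_of_Iic _ _ fun x => ?_
    rw [Measure.add_apply, withDensity_apply _ measurableSet_Iic,
      Measure.restrict_restrict measurableSet_Iic, Measure.smul_apply,
      Measure.dirac_apply' _ measurableSet_Iic, inter_comm, Ioc_inter_Iic]
    rcases lt_or_ge x 0 with hx | hx
    · have h0 : weighted μ (Iic x) = 0 :=
        weighted_absolutelyContinuous μ <| measure_mono_null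
          (fun y (hy : y ≤ x) (h : y ∈ Ico (0 : ℝ) 1) => (hy.trans_lt hx).not_ge h.1) hμ
      rw [h0, Ioc_eq_empty (by simp [hx.le])]
      simp [hx]
    · have hz : min T x ∈ Ico (0 : ℝ) 1 :=
        ⟨le_min hT.1.le hx, (min_le_left _ _).trans_lt hT.2⟩
      have h1 : (weighted μ).real (Iic x) = (weighted μ).real (Iic (min T x)) := by
        refine weighted_real_Iic_eq_of_null (min_le_right _ _) (measure_mono_null ?_ hμT)
        intro y hy
        by_contra! hyT
        exact hy.1.not_ge (le_min (not_lt.1 hyT) hy.2)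
      have hz1 : W ≤ W / (1 - min T x) := by
        rw [le_div_iff₀ (by linarith [hz.2])]
        nlinarith [hz.1]
      rw [setLIntegral_Ioc_div_one_sub_sq hW hz, ← ofReal_measureReal, h1,
        hH _ ⟨hz.1, min_le_left _ _⟩]
      simp only [mem_Iic, hx, indicator_of_mem, Pi.one_apply, smul_eq_mul, mul_one]
      rw [← ENNReal.ofReal_add hc (by linarith)]
      congr 1
      ring
  have hlt : ∀ᵐ x ∂(ENNReal.ofReal (W - c) • Measure.dirac 0 + D), x < 1 := by
    rw [ae_add_measure_iff]
    refine ⟨Measure.ae_smul_measure ?_ _, hDlt⟩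
    rw [ae_dirac_iff measurableSet_Iio]
    exact one_pos
  rw [← withDensity_inv_weighted hlt, ← key]
  exact (withDensity_inv_weighted (hμ.mono fun x hx => hx.2)).symm

theorem one_sub_eq_sqrt {P k t : ℝ} (hP : 0 < P) (hk : k = Real.sqrt ((P + 1) ^ 2 + 1))
    (ht : 0 < t) (h : (1 + P) * t / 2 * (1 / t ^ 2 - 1) = 1) :
    (1 + P) * t = k - 1 ∧ t = Real.sqrt ((k - 1) / (k + 1)) := by
  have hk2 : k ^ 2 = (P + 1) ^ 2 + 1 := by rw [hk, Real.sq_sqrt (by positivity)]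
  have hk0 : 0 ≤ k := hk ▸ Real.sqrt_nonneg _
  have hk1 : 1 < k := by nlinarith
  have hq : (1 + P) * (1 - t ^ 2) = 2 * t := by
    field_simp at h
    linarith
  have hW : (1 + P) * t = k - 1 := by
    have h2 : ((1 + P) * t + 1) ^ 2 = k ^ 2 := by
      rw [hk2]
      linear_combination (-(1 + P)) * hq
    have := (pow_left_inj₀ (by positivity) hk0 two_ne_zero).1 h2
    linarith
  refine ⟨hW, ?_⟩
  symm
  rw [Real.sqrt_eq_iff_mul_self_eq (div_nonneg (by linarith) (by linarith)) ht.le,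
    div_eq_iff (by linarith)]
  have h1 : (1 + P) ≠ 0 := by positivity
  refine mul_left_cancel₀ (pow_ne_zero 2 h1) ?_
  have e : (1 + P) ^ 2 * (t * t * (k + 1)) = ((1 + P) * t) ^ 2 * (k + 1) := by ring
  rw [hW] at e
  linear_combination (-1 : ℝ) * e + (1 - k) * hk2

end Density

theorem stmt6 (P : ℝ) (hP : 0 < P) (k h : ℝ)
    (hk : k = Real.sqrt ((P + 1) ^ 2 + 1))
    (hh : h = 1 - Real.sqrt ((k - 1) / (k + 1)))
    (f : ℝ → ℝ)
    (hf : ∀ x, f x = if x < h then (k - 1) / (1 - x) ^ 3 else 0)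
    (μ1 μ2 : Measure ℝ) [IsProbabilityMeasure μ1] [IsProbabilityMeasure μ2]
    -- strategies are supported on the action set [0,1]
    (hs1 : μ1 (Set.Icc (0 : ℝ) 1)ᶜ = 0) (hs2 : μ2 (Set.Icc (0 : ℝ) 1)ᶜ = 0)
    -- (μ1, μ2) is a mixed Nash equilibrium: no unilateral deviation helps
    (hne1 : ∀ ν : Measure ℝ, IsProbabilityMeasure ν → ν (Set.Icc (0 : ℝ) 1)ᶜ = 0 →
      (∫ x, (∫ y, u1 P x y ∂μ2) ∂ν) ≤ ∫ x, (∫ y, u1 P x y ∂μ2) ∂μ1)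
    (hne2 : ∀ ν : Measure ℝ, IsProbabilityMeasure ν → ν (Set.Icc (0 : ℝ) 1)ᶜ = 0 →
      (∫ x, (∫ y, u2 P x y ∂ν) ∂μ1) ≤ ∫ x, (∫ y, u2 P x y ∂μ2) ∂μ1) :
    μ1 = μ2 ∧
    μ1 = (volume.restrict (Set.Icc (0 : ℝ) 1)).withDensity
        (fun x => ENNReal.ofReal (f x)) := by
  have h1 : ∀ᵐ x ∂μ1, x ∈ Icc (0 : ℝ) 1 := hs1
  have h2 : ∀ᵐ x ∂μ2, x ∈ Icc (0 : ℝ) 1 := hs2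
  have := isFiniteMeasure_weighted h1
  have := isFiniteMeasure_weighted h2
  have hdirac : ∀ x ∈ Icc (0 : ℝ) 1, Measure.dirac x (Icc (0 : ℝ) 1)ᶜ = 0 := fun x hx => by
    simp [Measure.dirac_apply' _ measurableSet_Icc.compl, hx.1, hx.2]
  have B1 := bestResponse_of_forall_le hP h1 h2 fun x hx => by
    simpa using hne1 (Measure.dirac x) inferInstance (hdirac x hx)
  have B2 := bestResponse_of_forall_le hP h2 h1 fun x hx => by
    have h := hne2 (Measure.dirac x) inferInstance (hdirac x hx)
    simp only [u2] at h
    rw [integral_integral_u1_swap h1 h2] at h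
    simpa using h
  obtain ⟨T, hT, hT1, hT2, hH2, hH1⟩ := B1.exists_endpoint B2
  have hvalue : ∀ {μ : Measure ℝ} [IsProbabilityMeasure μ] [IsFiniteMeasure (weighted μ)] {W : ℝ},
      (∀ᵐ x ∂μ, x ∈ Icc (0 : ℝ) 1) → μ (Ioi T) = 0 →
      (weighted μ).real (Iic T) = W / (1 - T) - ((∫ y, y ∂μ) + P) → W = (1 + P) * (1 - T) := by
    intro μ _ _ W hμ hμT hμH
    have hfull : Iic T =ᵐ[weighted μ] univ := by
      rw [ae_eq_univ, compl_Iic]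
      exact weighted_absolutelyContinuous μ hμT
    rw [measureReal_congr hfull, weighted_real_apply hμ MeasurableSet.univ, Measure.restrict_univ,
      integral_sub (integrable_const _) (integrable_id_of_ae_mem_Icc hμ)] at hμH
    have ht : 1 - T ≠ 0 := by linarith [hT.2]
    rw [← div_eq_iff ht]
    simp at hμH
    linarith
  have hW1 := hvalue h2 hT2 (hH2 T ⟨hT.1.le, le_rfl⟩)
  have hW2 := hvalue h1 hT1 (hH1 T ⟨hT.1.le, le_rfl⟩)
  have ht : 0 < 1 - T := by linarith [hT.2]
  have hW : 0 < (1 + P) * (1 - T) := by positivity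
  rw [hW1] at hH2
  rw [hW2] at hH1
  have e1 := eq_dirac_add_withDensity (B1.ae_eq.mono fun x hx => hx.1) hT hW hH1 hT1
  have e2 := eq_dirac_add_withDensity (B2.ae_eq.mono fun x hx => hx.1) hT hW hH2 hT2
  set D := (volume.restrict (Ioc 0 T)).withDensity
    fun x => ENNReal.ofReal ((1 + P) * (1 - T) / (1 - x) ^ 3) with hD
  set a1 := ENNReal.ofReal ((1 + P) * (1 - T) - ((∫ y, y ∂μ1) + P))
  set a2 := ENNReal.ofReal ((1 + P) * (1 - T) - ((∫ y, y ∂μ2) + P))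
  have m1 : a1 + D univ = 1 := by
    rw [← measure_univ (μ := μ1), e1]
    simp
  have m2 : a2 + D univ = 1 := by
    rw [← measure_univ (μ := μ2), e2]
    simp
  have hDfin : D univ ≠ ⊤ := fun h => by simp [h] at m1
  have ha : a1 = a2 := (ENNReal.add_left_inj hDfin).1 (m1.trans m2.symm)
  have ha0 : a1 = 0 := by
    by_contra hne
    have hμ1 : μ1 {0} ≠ 0 := by
      rw [e1]
      simp [hne]
    have hμ2 := B1.measure_singleton_of_atom hμ1
    rw [e2] at hμ2
    simp [← ha, hne] at hμ2
  rw [← ha, ha0, zero_smul, zero_add] at e2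
  rw [ha0, zero_smul, zero_add] at e1
  refine ⟨e1.trans e2.symm, ?_⟩
  have hmass : (1 + P) * (1 - T) / 2 * (1 / (1 - T) ^ 2 - 1) = 1 := by
    rw [ha0, zero_add, hD, withDensity_apply _ MeasurableSet.univ, Measure.restrict_univ,
      setLIntegral_Ioc_div_one_sub_cube hW ⟨hT.1.le, hT.2⟩] at m1
    simpa using m1
  obtain ⟨hWk, htk⟩ := one_sub_eq_sqrt hP hk ht hmass
  have hTh : T = h := by rw [hh, ← htk]; ring
  have hfind : (fun x => ENNReal.ofReal (f x)) =
      (Iio h).indicator fun x => ENNReal.ofReal ((k - 1) / (1 - x) ^ 3) := by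
    ext x
    by_cases hx : x < h <;> simp [hf, hx]
  have hset : Iio h ∩ Icc 0 1 = Ico 0 h := by
    ext x
    exact ⟨fun hx => ⟨hx.2.1, hx.1⟩, fun hx => ⟨hx.2, hx.1, (hx.2.trans (hTh ▸ hT.2)).le⟩⟩
  rw [e1, hD, hWk, hTh, hfind, withDensity_indicator measurableSet_Iio,
    Measure.restrict_restrict measurableSet_Iio, hset, Measure.restrict_congr_set Ico_ae_eq_Ioc]
end

section
/- Let P > 0, set r_max = 1/2 − P²/(2(P+1)²), and define p(x) = P/(1−2x)^{3/2} for 0 ≤ x < r_max and p(x) = 0 for r_max ≤ x ≤ 1. Then: (i) ∫_0^1 p(x) dx = 1; (ii) ∫_0^1 x·p(x) dx = 1/(2P+2); and (iii) for every a ∈ [0, r_max], a·P = ∫_0^a p(b)·(1 − a − b) db, i.e., the equilibrium indifference condition of the CfR game with perfectly negatively correlated risks (ρ = −1) holds on the support of p. -/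
open MeasureTheory

lemma rpow_three_halves_eq_sqrt_pow {y : ℝ} (hy : 0 ≤ y) :
    y ^ ((3 : ℝ) / 2) = √y ^ 3 := by
  rw [Real.sqrt_eq_rpow, ← Real.rpow_natCast, ← Real.rpow_mul hy]
  norm_num

lemma hasDerivAt_affine_div_sqrt_pow (c d x : ℝ) (hx : x < 1 / 2) :
    HasDerivAt (fun y : ℝ => (c + d / 2) * (√(1 - 2 * y))⁻¹ + d / 2 * √(1 - 2 * y))
      ((c + d * x) / √(1 - 2 * x) ^ 3) x := by
  have hpos : 0 < 1 - 2 * x := by linarith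
  have hsqrt : 0 < √(1 - 2 * x) := Real.sqrt_pos.mpr hpos
  have hsq : √(1 - 2 * x) ^ 2 = 1 - 2 * x := Real.sq_sqrt hpos.le
  have hlin : HasDerivAt (fun y : ℝ => 1 - 2 * y) (-2) x := by
    simpa using ((hasDerivAt_id x).const_mul 2).const_sub 1
  have hroot := hlin.sqrt hpos.ne'
  refine (((hroot.fun_inv hsqrt.ne').const_mul (c + d / 2)).add
    (hroot.const_mul (d / 2))).congr_deriv ?_
  have hx' : x = (1 - √(1 - 2 * x) ^ 2) / 2 := by linarith
  generalize √(1 - 2 * x) = v at *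
  subst hx'
  field_simp
  ring

/-- Integrals of affine functions against the density `P / (1 - 2x)^(3/2)` on `[0, a]`. -/
lemma integral_affine_mul_density (P c d a : ℝ) (ha₀ : 0 ≤ a) (ha : a < 1 / 2) :
    IntervalIntegrable (fun x : ℝ => (c + d * x) * (P / (1 - 2 * x) ^ ((3 : ℝ) / 2)))
      volume 0 a ∧
    ∫ x in (0 : ℝ)..a, (c + d * x) * (P / (1 - 2 * x) ^ ((3 : ℝ) / 2)) =
      P * ((c + d / 2) * ((√(1 - 2 * a))⁻¹ - 1) + d / 2 * (√(1 - 2 * a) - 1)) := by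
  have hint : IntervalIntegrable
      (fun x : ℝ => (c + d * x) * (P / (1 - 2 * x) ^ ((3 : ℝ) / 2))) volume 0 a := by
    apply ContinuousOn.intervalIntegrable
    rw [Set.uIcc_of_le ha₀]
    refine ContinuousOn.mul (by fun_prop) (continuousOn_const.div ?_ ?_)
    · exact ContinuousOn.rpow_const (by fun_prop) fun x _ => Or.inr (by norm_num)
    · intro x hx
      exact (Real.rpow_pos_of_pos (by linarith [hx.2]) _).ne'
  refine ⟨hint, ?_⟩
  rw [intervalIntegral.integral_eq_sub_of_hasDerivAt (f := fun y : ℝ =>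
    P * ((c + d / 2) * (√(1 - 2 * y))⁻¹ + d / 2 * √(1 - 2 * y))) ?_ hint]
  · simp only [mul_zero, sub_zero, Real.sqrt_one, inv_one]
    ring
  · intro x hx
    rw [Set.uIcc_of_le ha₀] at hx
    have hx' : x < 1 / 2 := hx.2.trans_lt ha
    refine ((hasDerivAt_affine_div_sqrt_pow c d x hx').const_mul P).congr_deriv ?_
    rw [rpow_three_halves_eq_sqrt_pow (by linarith)]
    ring

theorem stmt16 (P : ℝ) (hP : 0 < P) (rmax : ℝ)
    (hrmax : rmax = 1 / 2 - P ^ 2 / (2 * (P + 1) ^ 2))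
    (p : ℝ → ℝ)
    (hp : ∀ x ∈ Set.Icc (0 : ℝ) 1,
      p x = if x < rmax then P / (1 - 2 * x) ^ ((3 : ℝ) / 2) else 0) :
    (∫ x in (0 : ℝ)..1, p x) = 1 ∧
    (∫ x in (0 : ℝ)..1, x * p x) = 1 / (2 * P + 2) ∧
    ∀ a ∈ Set.Icc (0 : ℝ) rmax,
      a * P = ∫ b in (0 : ℝ)..a, p b * (1 - a - b) := by
  have hlt : rmax < 1 / 2 := by
    have : 0 < P ^ 2 / (2 * (P + 1) ^ 2) := by positivity
    linarith
  have hsq : 1 - 2 * rmax = (P / (P + 1)) ^ 2 := by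
    rw [hrmax]
    field_simp
    ring
  have hroot : √(1 - 2 * rmax) = P / (P + 1) := by
    rw [hsq, Real.sqrt_sq (by positivity)]
  have hnonneg : 0 ≤ rmax := by
    have : (P / (P + 1)) ^ 2 ≤ 1 :=
      pow_le_one₀ (by positivity) ((div_le_one (by positivity)).mpr (by linarith))
    linarith
  have hEq (c d a : ℝ) (ha₀ : 0 ≤ a) (ha : a ≤ rmax) :
      Set.EqOn (fun x => (c + d * x) * (P / (1 - 2 * x) ^ ((3 : ℝ) / 2)))
        (fun x => (c + d * x) * p x) (Set.uIoo 0 a) := by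
    intro x hx
    rw [Set.uIoo_of_le ha₀] at hx
    simp only [hp x ⟨hx.1.le, by linarith [hx.2]⟩, if_pos (hx.2.trans_le ha)]
  have hpartial (c d a : ℝ) (ha₀ : 0 ≤ a) (ha : a ≤ rmax) :
      ∫ x in (0 : ℝ)..a, (c + d * x) * p x =
        P * ((c + d / 2) * ((√(1 - 2 * a))⁻¹ - 1) + d / 2 * (√(1 - 2 * a) - 1)) := by
    rw [← (integral_affine_mul_density P c d a ha₀ (ha.trans_lt hlt)).2]
    exact (intervalIntegral.integral_congr_uIoo (hEq c d a ha₀ ha)).symm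
  have htotal (c d : ℝ) : ∫ x in (0 : ℝ)..1, (c + d * x) * p x =
      P * ((c + d / 2) * ((P / (P + 1))⁻¹ - 1) + d / 2 * (P / (P + 1) - 1)) := by
    have hzero : Set.EqOn (fun _ => (0 : ℝ)) (fun x => (c + d * x) * p x)
        (Set.uIoo rmax 1) := by
      intro x hx
      rw [Set.uIoo_of_le (by linarith)] at hx
      simp only [hp x ⟨hnonneg.trans hx.1.le, hx.2.le⟩, if_neg hx.1.le.not_gt, mul_zero]
    rw [← intervalIntegral.integral_add_adjacent_intervals (b := rmax)
      ((integral_affine_mul_density P c d rmax hnonneg hlt).1.congr_uIoo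
        (hEq c d rmax hnonneg le_rfl))
      ((intervalIntegrable_const (c := (0 : ℝ))).congr_uIoo hzero),
      hpartial c d rmax hnonneg le_rfl, ← intervalIntegral.integral_congr_uIoo hzero, hroot]
    simp
  refine ⟨?_, ?_, ?_⟩
  · have h := htotal 1 0
    simp only [zero_mul, add_zero, one_mul] at h
    rw [h]
    field_simp
    ring
  · have h := htotal 0 1
    simp only [zero_add, one_mul] at h
    rw [h]
    field_simp
    ring
  · intro a ha
    have hpos : 0 < 1 - 2 * a := by linarith [ha.2]
    have hsqrt : 0 < √(1 - 2 * a) := Real.sqrt_pos.mpr hpos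
    have hsq : √(1 - 2 * a) ^ 2 = 1 - 2 * a := Real.sq_sqrt hpos.le
    have h := hpartial (1 - a) (-1) a ha.1 ha.2
    have hcomm : (fun b => p b * (1 - a - b)) = fun b => (1 - a + -1 * b) * p b := by
      funext b
      ring
    rw [hcomm, h]
    have ha' : a = (1 - √(1 - 2 * a) ^ 2) / 2 := by linarith
    clear h hcomm ha hpos hsq
    generalize √(1 - 2 * a) = v at *
    subst ha'
    field_simp
    ring
end
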